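/- Let G be a graph and X ⊆ V(G). Let H be a connected component of G - X that is a d-quasi-forest (has a feedback vertex set of size at most d), and let X_I ⊆ X be an independent set of G with conf_H(X_I) > 0. Then there exists X' ⊆ X_I with |X'| ≤ d + 2 and conf_H(X') > 0. -/

import Mathlib

attribute [local instance] Classical.propDecidable

namespace VCKernel

variable {V : Type*} [Fintype V] [DecidableEq V]

/-- `S` is an independent set of `G`. -/
def IsIndep (G : SimpleGraph V) (S : Finset V) : Prop :=
  ∀ u ∈ S, ∀ v ∈ S, ¬ G.Adj u v

/-- Independence number of the subgraph of `G` induced on the vertex set `A`. -/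
noncomputable def alphaOn (G : SimpleGraph V) (A : Set V) : ℕ :=
  sSup {n | ∃ S : Finset V, ↑S ⊆ A ∧ IsIndep G S ∧ S.card = n}

/-- Independence number `α(G)`. -/
noncomputable def alpha (G : SimpleGraph V) : ℕ := alphaOn G Set.univ

/-- `Y` is a blocking set: deleting it decreases the independence number. -/
def IsBlocking (G : SimpleGraph V) (Y : Finset V) : Prop :=
  alphaOn G (Set.univ \ ↑Y) < alpha G

/-- `Y` is a minimal blocking set. -/
def IsMinBlocking (G : SimpleGraph V) (Y : Finset V) : Prop :=
  IsBlocking G Y ∧ ∀ Y' ⊂ Y, ¬ IsBlocking G Y'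

/-- Open neighborhood of the vertex set `X'` in `G`. -/
def nbhd (G : SimpleGraph V) (X' : Finset V) : Set V :=
  {v | ∃ u ∈ X', G.Adj u v}

/-- Number of conflicts induced by `X'` on the induced subgraph with vertex set `A`. -/
noncomputable def conf (G : SimpleGraph V) (A : Set V) (X' : Finset V) : ℕ :=
  alphaOn G A - alphaOn G (A \ nbhd G X')

/-- `C` is (the vertex set of) a connected component of the subgraph of `G`
induced on `A`. -/
def IsCompOf (G : SimpleGraph V) (A C : Set V) : Prop :=
  C ⊆ A ∧ (G.induce C).Connected ∧ ∀ u ∈ C, ∀ v ∈ A, G.Adj u v → v ∈ C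

/-- Feasible solution to the Independent Set LP of the subgraph induced on `A`. -/
def FeasISOn (G : SimpleGraph V) (A : Set V) (x : V → ℝ) : Prop :=
  (∀ v ∈ A, 0 ≤ x v ∧ x v ≤ 1) ∧
    ∀ u ∈ A, ∀ v ∈ A, G.Adj u v → x u + x v ≤ 1

/-- Half-integrality on `A`. -/
def HalfIntOn (A : Set V) (x : V → ℝ) : Prop :=
  ∀ v ∈ A, x v = 0 ∨ x v = 1/2 ∨ x v = 1

/-- Objective value of an LP solution on vertex set `A`. -/
noncomputable def weightOn (A : Set V) (x : V → ℝ) : ℝ :=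
  ∑ v, if v ∈ A then x v else 0

/-- `x` is an optimum half-integral solution to the Independent Set LP
of the subgraph induced on `A`. -/
def OptHIOn (G : SimpleGraph V) (A : Set V) (x : V → ℝ) : Prop :=
  FeasISOn G A x ∧ HalfIntOn A x ∧
    ∀ y : V → ℝ, FeasISOn G A y → HalfIntOn A y → weightOn A y ≤ weightOn A x

/-- Feasible solution to the Vertex Cover LP of `G`. -/
def FeasVC (G : SimpleGraph V) (x : V → ℝ) : Prop :=
  (∀ v, 0 ≤ x v ∧ x v ≤ 1) ∧ ∀ u v, G.Adj u v → 1 ≤ x u + x v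

/-- Optimum value of the Independent Set LP of `G`. -/
noncomputable def lpIS (G : SimpleGraph V) : ℝ :=
  sSup {w | ∃ x : V → ℝ, FeasISOn G Set.univ x ∧ w = ∑ v, x v}

/-- Optimum value of the Vertex Cover LP of `G`. -/
noncomputable def lpVC (G : SimpleGraph V) : ℝ :=
  sInf {w | ∃ x : V → ℝ, FeasVC G x ∧ w = ∑ v, x v}

/-- `C` is a vertex cover of `G`. -/
def IsVC (G : SimpleGraph V) (C : Finset V) : Prop :=
  ∀ u v, G.Adj u v → u ∈ C ∨ v ∈ C

/-- Vertex cover number of `G`. -/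
noncomputable def vcNum (G : SimpleGraph V) : ℕ :=
  sInf {n | ∃ C : Finset V, IsVC G C ∧ C.card = n}

/-- `Z` is a feedback vertex set of `G`. -/
def IsFVS (G : SimpleGraph V) (Z : Finset V) : Prop :=
  (G.induce ((↑Z : Set V)ᶜ)).IsAcyclic

/-- `Z` is an odd cycle transversal of `G`. -/
def IsOCT (G : SimpleGraph V) (Z : Finset V) : Prop :=
  (G.induce ((↑Z : Set V)ᶜ)).Colorable 2

/-- `G` is a `d`-quasi-forest: each connected component has a feedback
vertex set of size at most `d`. -/
def QuasiForest (G : SimpleGraph V) (d : ℕ) : Prop :=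
  ∀ C : Set V, IsCompOf G Set.univ C →
    ∃ Z : Finset V, Z.card ≤ d ∧ (G.induce (C \ ↑Z)).IsAcyclic

/-- `G` is `d`-quasi-bipartite: each connected component has an odd cycle
transversal of size at most `d`. -/
def QuasiBipartite (G : SimpleGraph V) (d : ℕ) : Prop :=
  ∀ C : Set V, IsCompOf G Set.univ C →
    ∃ Z : Finset V, Z.card ≤ d ∧ (G.induce (C \ ↑Z)).Colorable 2

/-- Feedback vertex set number of `G`. -/
noncomputable def fvsNum (G : SimpleGraph V) : ℕ :=
  sInf {n | ∃ Z : Finset V, IsFVS G Z ∧ Z.card = n}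

/-- Odd cycle transversal number of `G`. -/
noncomputable def octNum (G : SimpleGraph V) : ℕ :=
  sInf {n | ∃ Z : Finset V, IsOCT G Z ∧ Z.card = n}

/-- The subgraph of `G` induced on `A` has treedepth at most `k`
(elimination-forest characterization of treedepth). -/
def tdLE (G : SimpleGraph V) : ℕ → Set V → Prop
  | 0, A => A = ∅
  | (k+1), A => ∀ C : Set V, IsCompOf G A C → ∃ v ∈ C, tdLE G k (C \ {v})

/-!
For a finite vertex set `A`, let `λ(A)` be the largest `|L| + |R|` over pairs `L, R ⊆ A` with no
edge between `L` and `R`; this is the independence number of the bipartite double cover of `G[A]`,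
hence twice the half-integral optimum of its independent set LP, and `2 α(A) ≤ λ(A)`. Pairs are
closed under coordinatewise majority, and the amount by which a pair falls short of `λ(A)` is
subadditive under majority. Applied to an optimal pair, its swap, and a maximum independent set,
this shows that `α` does not drop as long as `λ` does not (Nemhauser-Trotter). Applied to three
optimal pairs, it shows that if deleting `Y` lowers `λ` then so does deleting some `Y₁ ⊆ Y` with
one or two elements (Helly), and an uncrossing argument lets us choose `Y₁` so that `λ` drops by
at least `|Y₁|`.

If an odd cycle transversal of `A` has size `d`, then `λ(A) ≤ 2 α(A) + d`. So while the deleted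
part of a blocking set `Y` does not lower `α`, we delete one or two further vertices of `Y`, and
`λ` falls below `2 α(A)` as soon as more than `d`, hence at most `d + 2`, vertices have been
deleted.
-/

section FiniteVertexSets

variable {W : Type*} {G : SimpleGraph W}

theorem bddAbove_card_isIndep {A : Set W} (hA : A.Finite) :
    BddAbove {n | ∃ S : Finset W, ↑S ⊆ A ∧ IsIndep G S ∧ S.card = n} := by
  lift A to Finset W using hA
  refine ⟨A.card, ?_⟩
  rintro _ ⟨S, hSA, -, rfl⟩
  exact Finset.card_le_card (Finset.coe_subset.1 hSA)

theorem IsIndep.card_le_alphaOn {A : Set W} (hA : A.Finite) {S : Finset W} (hS : IsIndep G S)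
    (hSA : ↑S ⊆ A) : S.card ≤ alphaOn G A :=
  le_csSup (bddAbove_card_isIndep hA) ⟨S, hSA, hS, rfl⟩

theorem exists_isIndep_card_eq_alphaOn {A : Set W} (hA : A.Finite) :
    ∃ S : Finset W, ↑S ⊆ A ∧ IsIndep G S ∧ S.card = alphaOn G A :=
  Nat.sSup_mem (s := {n | ∃ S : Finset W, (S : Set W) ⊆ A ∧ IsIndep G S ∧ S.card = n})
    ⟨0, ∅, by simp [IsIndep]⟩ (bddAbove_card_isIndep hA)

theorem alphaOn_mono {A B : Set W} (hB : B.Finite) (hAB : A ⊆ B) : alphaOn G A ≤ alphaOn G B := by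
  obtain ⟨S, hSA, hS, hcard⟩ := exists_isIndep_card_eq_alphaOn (G := G) (hB.subset hAB)
  exact hcard ▸ hS.card_le_alphaOn hB (hSA.trans hAB)

theorem conf_pos_iff {A : Set W} {S : Finset W} :
    0 < conf G A S ↔ alphaOn G (A \ nbhd G S) < alphaOn G A :=
  tsub_pos_iff_lt

theorem exists_subset_card_le_subset_nbhd {S Y : Finset W} (hY : ↑Y ⊆ nbhd G S) :
    ∃ S' ⊆ S, S'.card ≤ Y.card ∧ ↑Y ⊆ nbhd G S' := by
  have hneighbor (y : W) (hy : y ∈ Y) : ∃ u ∈ S, G.Adj u y := hY hy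
  choose! g hgS hadj using hneighbor
  exact ⟨Y.image g, Finset.image_subset_iff.2 hgS, Finset.card_image_le,
    fun y hy => ⟨g y, Finset.mem_image_of_mem g hy, hadj y hy⟩⟩

theorem exists_isIndep_union_eq_of_colorable_two [DecidableEq W] {S : Finset W}
    (hS : (G.induce (S : Set W)).Colorable 2) :
    ∃ K K' : Finset W, IsIndep G K ∧ IsIndep G K' ∧ K ∪ K' = S := by
  obtain ⟨color⟩ := hS
  let colorClass (i : Fin 2) : Finset W := {v ∈ S | ∃ h : v ∈ S, color ⟨v, h⟩ = i}
  have indep_colorClass (i : Fin 2) : IsIndep G (colorClass i) := by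
    intro u hu v hv hadj
    obtain ⟨_, hu, hui⟩ := Finset.mem_filter.1 hu
    obtain ⟨_, hv, hvi⟩ := Finset.mem_filter.1 hv
    have : (G.induce (S : Set W)).Adj ⟨u, hu⟩ ⟨v, hv⟩ := hadj
    exact color.valid this (hui.trans hvi.symm)
  refine ⟨colorClass 0, colorClass 1, indep_colorClass 0, indep_colorClass 1, ?_⟩
  ext v
  simp only [colorClass, Finset.mem_union, Finset.mem_filter]
  have (h : v ∈ S) : color ⟨v, h⟩ = 0 ∨ color ⟨v, h⟩ = 1 := by omega
  grind

end FiniteVertexSets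

section Majority

variable {W : Type*} [DecidableEq W] {a b c : Finset W}

/-- The majority (median) of three finite sets: the elements lying in at least two of them. -/
def majority (a b c : Finset W) : Finset W := (a ∩ b) ∪ (c ∩ (a ∪ b))

theorem mem_majority {v : W} :
    v ∈ majority a b c ↔ (v ∈ a ∧ v ∈ b) ∨ (v ∈ c ∧ (v ∈ a ∨ v ∈ b)) := by
  simp [majority]

theorem majority_left_comm (a b c : Finset W) : majority b a c = majority a b c := by
  rw [majority, majority, Finset.inter_comm b a, Finset.union_comm b a]

theorem majority_subset_majority {a' b' c' : Finset W} (ha : a ⊆ a') (hb : b ⊆ b') (hc : c ⊆ c') :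
    majority a b c ⊆ majority a' b' c' :=
  Finset.union_subset_union (Finset.inter_subset_inter ha hb)
    (Finset.inter_subset_inter hc (Finset.union_subset_union ha hb))

theorem majority_self_left (a c : Finset W) : majority a a c = a := by
  simp [majority]

theorem card_majority_add (a b c : Finset W) :
    (majority a b c).card + (a ∪ b ∪ c).card + (a ∩ b ∩ c).card = a.card + b.card + c.card := by
  have hab := Finset.card_union_add_card_inter a b
  have habc := Finset.card_union_add_card_inter (a ∪ b) c
  have hmaj := Finset.card_union_add_card_inter (a ∩ b) (c ∩ (a ∪ b))
  have hinter : (a ∩ b) ∩ (c ∩ (a ∪ b)) = a ∩ b ∩ c := by grind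
  rw [hinter] at hmaj
  rw [Finset.inter_comm (a ∪ b) c] at habc
  rw [majority]
  omega

end Majority

section Biindependence

variable {W : Type*} {G : SimpleGraph W} {A B L R : Finset W}

/-- `(L, R)` is a biindependent pair in `A`: two possibly overlapping subsets of `A` without edges
between them, i.e. an independent set of the bipartite double cover of `G[A]`. It encodes the
half-integral fractional independent set taking the value `1` on `L ∩ R`, and `1/2` on the rest of
`L ∪ R`. -/
structure IsBiindep (G : SimpleGraph W) (A L R : Finset W) : Prop where
  left_subset : L ⊆ A
  right_subset : R ⊆ A
  not_adj : ∀ u ∈ L, ∀ v ∈ R, ¬ G.Adj u v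

theorem IsBiindep.symm (h : IsBiindep G A L R) : IsBiindep G A R L :=
  ⟨h.right_subset, h.left_subset, fun u hu v hv huv => h.not_adj v hv u hu huv.symm⟩

theorem IsBiindep.mono (h : IsBiindep G A L R) (hAB : A ⊆ B) : IsBiindep G B L R :=
  ⟨h.left_subset.trans hAB, h.right_subset.trans hAB, h.not_adj⟩

theorem IsIndep.isBiindep {S : Finset W} (hS : IsIndep G S) (hSA : S ⊆ A) : IsBiindep G A S S :=
  ⟨hSA, hSA, hS⟩

/-- The maximum of `|L| + |R|` over the biindependent pairs `(L, R)` in `A`, i.e. twice the optimum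
of the half-integral independent set LP of `G[A]`. The factor keeps it integral. -/
noncomputable def biindepNum (G : SimpleGraph W) (A : Finset W) : ℕ :=
  sSup {n | ∃ L R : Finset W, IsBiindep G A L R ∧ L.card + R.card = n}

theorem bddAbove_card_add_card_isBiindep (G : SimpleGraph W) (A : Finset W) :
    BddAbove {n | ∃ L R : Finset W, IsBiindep G A L R ∧ L.card + R.card = n} := by
  refine ⟨A.card + A.card, ?_⟩
  rintro _ ⟨L, R, h, rfl⟩
  exact add_le_add (Finset.card_le_card h.left_subset) (Finset.card_le_card h.right_subset)

theorem IsBiindep.card_add_card_le (h : IsBiindep G A L R) : L.card + R.card ≤ biindepNum G A :=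
  le_csSup (bddAbove_card_add_card_isBiindep G A) ⟨L, R, h, rfl⟩

theorem exists_isBiindep_card_add_card_eq (G : SimpleGraph W) (A : Finset W) :
    ∃ L R : Finset W, IsBiindep G A L R ∧ L.card + R.card = biindepNum G A :=
  Nat.sSup_mem (s := {n | ∃ L R : Finset W, IsBiindep G A L R ∧ L.card + R.card = n})
    ⟨0, ∅, ∅, ⟨by simp, by simp, by simp⟩, rfl⟩ (bddAbove_card_add_card_isBiindep G A)

theorem biindepNum_mono (hAB : A ⊆ B) : biindepNum G A ≤ biindepNum G B := by
  obtain ⟨L, R, h, hcard⟩ := exists_isBiindep_card_add_card_eq G A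
  exact hcard ▸ (h.mono hAB).card_add_card_le

theorem two_mul_alphaOn_le_biindepNum (G : SimpleGraph W) (A : Finset W) :
    2 * alphaOn G A ≤ biindepNum G A := by
  obtain ⟨S, hSA, hS, hcard⟩ := exists_isIndep_card_eq_alphaOn (G := G) A.finite_toSet
  rw [← hcard, two_mul]
  exact (hS.isBiindep (Finset.coe_subset.1 hSA)).card_add_card_le

variable [DecidableEq W] {L₁ R₁ L₂ R₂ L₃ R₃ : Finset W}

theorem IsBiindep.inter_union (h₁ : IsBiindep G A L₁ R₁) (h₂ : IsBiindep G A L₂ R₂) :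
    IsBiindep G A (L₁ ∩ L₂) (R₁ ∪ R₂) where
  left_subset := Finset.inter_subset_left.trans h₁.left_subset
  right_subset := Finset.union_subset h₁.right_subset h₂.right_subset
  not_adj u hu v hv := by
    rw [Finset.mem_inter] at hu
    exact (Finset.mem_union.1 hv).elim (h₁.not_adj u hu.1 v) (h₂.not_adj u hu.2 v)

theorem IsBiindep.union_inter (h₁ : IsBiindep G A L₁ R₁) (h₂ : IsBiindep G A L₂ R₂) :
    IsBiindep G A (L₁ ∪ L₂) (R₁ ∩ R₂) :=
  (h₁.symm.inter_union h₂.symm).symm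

theorem IsBiindep.isBiindep_majority (h₁ : IsBiindep G A L₁ R₁) (h₂ : IsBiindep G A L₂ R₂)
    (h₃ : IsBiindep G A L₃ R₃) : IsBiindep G A (majority L₁ L₂ L₃) (majority R₁ R₂ R₃) where
  left_subset := majority_self_left A A ▸
    majority_subset_majority h₁.left_subset h₂.left_subset h₃.left_subset
  right_subset := majority_self_left A A ▸
    majority_subset_majority h₁.right_subset h₂.right_subset h₃.right_subset
  -- Two majorities among three indices share an index.
  not_adj u hu v hv := by
    rw [mem_majority] at hu hv
    have := h₁.not_adj u
    have := h₂.not_adj u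
    have := h₃.not_adj u
    grind

theorem IsBiindep.card_add_card_le_majority (h₁ : IsBiindep G A L₁ R₁) (h₂ : IsBiindep G A L₂ R₂)
    (h₃ : IsBiindep G A L₃ R₃) :
    (L₁.card + R₁.card) + (L₂.card + R₂.card) + (L₃.card + R₃.card) ≤
      (majority L₁ L₂ L₃).card + (majority R₁ R₂ R₃).card + 2 * biindepNum G A := by
  have hinf := ((h₁.inter_union h₂).inter_union h₃).card_add_card_le
  have hsup := ((h₁.union_inter h₂).union_inter h₃).card_add_card_le
  have hL := card_majority_add L₁ L₂ L₃
  have hR := card_majority_add R₁ R₂ R₃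
  omega

omit [DecidableEq W] in
theorem alphaOn_le_of_biindepNum_le (hBA : B ⊆ A) (h : biindepNum G A ≤ biindepNum G B) :
    alphaOn G A ≤ alphaOn G B := by
  obtain ⟨L, R, hLR, hcard⟩ := exists_isBiindep_card_add_card_eq G B
  obtain ⟨S, hSA, hS, hScard⟩ := exists_isIndep_card_eq_alphaOn (G := G) A.finite_toSet
  have hLR_A := hLR.mono hBA
  have hSS := hS.isBiindep (Finset.coe_subset.1 hSA)
  have hdiag : IsBiindep G A (majority L R S) (majority L R S) := by
    simpa only [majority_left_comm L R S] using hLR_A.isBiindep_majority hLR_A.symm hSS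
  have hsubset : majority L R S ⊆ B := majority_self_left B A ▸
    majority_subset_majority hLR.left_subset hLR.right_subset hSS.left_subset
  have hmaj_le : (majority L R S).card ≤ alphaOn G B :=
    IsIndep.card_le_alphaOn B.finite_toSet hdiag.not_adj (Finset.coe_subset.2 hsubset)
  have hsum := hLR_A.card_add_card_le_majority hLR_A.symm hSS
  rw [majority_left_comm L R S] at hsum
  omega

theorem biindepNum_le_majority {B₁ B₂ B₃ : Finset W} (hB₁ : B₁ ⊆ A) (hB₂ : B₂ ⊆ A) (hB₃ : B₃ ⊆ A)
    (h₁ : biindepNum G A ≤ biindepNum G B₁) (h₂ : biindepNum G A ≤ biindepNum G B₂)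
    (h₃ : biindepNum G A ≤ biindepNum G B₃) :
    biindepNum G A ≤ biindepNum G (majority B₁ B₂ B₃) := by
  obtain ⟨L₁, R₁, hLR₁, hcard₁⟩ := exists_isBiindep_card_add_card_eq G B₁
  obtain ⟨L₂, R₂, hLR₂, hcard₂⟩ := exists_isBiindep_card_add_card_eq G B₂
  obtain ⟨L₃, R₃, hLR₃, hcard₃⟩ := exists_isBiindep_card_add_card_eq G B₃
  have hsum := (hLR₁.mono hB₁).card_add_card_le_majority (hLR₂.mono hB₂) (hLR₃.mono hB₃)
  have hmaj : IsBiindep G (majority B₁ B₂ B₃) (majority L₁ L₂ L₃) (majority R₁ R₂ R₃) :=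
    ⟨majority_subset_majority hLR₁.left_subset hLR₂.left_subset hLR₃.left_subset,
      majority_subset_majority hLR₁.right_subset hLR₂.right_subset hLR₃.right_subset,
      ((hLR₁.mono hB₁).isBiindep_majority (hLR₂.mono hB₂) (hLR₃.mono hB₃)).not_adj⟩
  have := hmaj.card_add_card_le
  omega

theorem biindepNum_le_sdiff_of_forall_card_le_two {Y : Finset W}
    (h : ∀ Y' ⊆ Y, Y'.card ≤ 2 → biindepNum G A ≤ biindepNum G (A \ Y')) :
    biindepNum G A ≤ biindepNum G (A \ Y) := by
  induction Y using Finset.strongInduction with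
  | H Y ih =>
    by_cases hcard : Y.card ≤ 2
    · exact h Y subset_rfl hcard
    obtain ⟨x, hx, y, hy, z, hz, hxy, hxz, hyz⟩ := Finset.two_lt_card.1 (not_le.1 hcard)
    have herase (w : W) (hw : w ∈ Y) : biindepNum G A ≤ biindepNum G (A \ Y.erase w) :=
      ih _ (Finset.erase_ssubset hw) fun Y' hY' => h Y' (hY'.trans (Finset.erase_subset w Y))
    have hmaj : majority (A \ Y.erase x) (A \ Y.erase y) (A \ Y.erase z) = A \ Y := by
      ext v
      simp only [mem_majority, Finset.mem_sdiff, Finset.mem_erase]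
      grind
    exact hmaj ▸ biindepNum_le_majority Finset.sdiff_subset Finset.sdiff_subset
      Finset.sdiff_subset (herase x hx) (herase y hy) (herase z hz)

omit [DecidableEq W] in
theorem exists_isBiindep_left_subset_of_biindepNum_le_add_one (hBA : B ⊆ A)
    (h : biindepNum G A ≤ biindepNum G B + 1) :
    ∃ P Q : Finset W, IsBiindep G A P Q ∧ P ⊆ B ∧ biindepNum G A ≤ P.card + Q.card := by
  obtain ⟨L₁, R₁, hLR₁, hcard₁⟩ := exists_isBiindep_card_add_card_eq G B
  obtain ⟨L₂, R₂, hLR₂, hcard₂⟩ := exists_isBiindep_card_add_card_eq G A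
  have hLcard := Finset.card_union_add_card_inter L₁ L₂
  have hRcard := Finset.card_union_add_card_inter R₁ R₂
  -- The meet and the join have total size at least `2 * biindepNum G A - 1`, so one is optimal.
  by_cases hmeet : biindepNum G A ≤ (L₁ ∩ L₂).card + (R₁ ∪ R₂).card
  · exact ⟨L₁ ∩ L₂, R₁ ∪ R₂, (hLR₁.mono hBA).inter_union hLR₂,
      Finset.inter_subset_left.trans hLR₁.left_subset, hmeet⟩
  · exact ⟨R₁ ∩ R₂, L₁ ∪ L₂, ((hLR₁.mono hBA).union_inter hLR₂).symm,
      Finset.inter_subset_left.trans hLR₁.right_subset, by omega⟩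

theorem biindepNum_le_inter_of_le_add_one {B₁ B₂ : Finset W} (hB₁ : B₁ ⊆ A) (hB₂ : B₂ ⊆ A)
    (h₁ : biindepNum G A ≤ biindepNum G B₁) (h₂ : biindepNum G A ≤ biindepNum G B₂)
    (h : biindepNum G A ≤ biindepNum G (B₁ ∩ B₂) + 1) :
    biindepNum G A ≤ biindepNum G (B₁ ∩ B₂) := by
  obtain ⟨L, R, hLR, hLRcard⟩ := exists_isBiindep_card_add_card_eq G B₁
  obtain ⟨P, Q, hPQ, hP, hPQcard⟩ := exists_isBiindep_left_subset_of_biindepNum_le_add_one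
    Finset.inter_subset_right ((biindepNum_mono hB₂).trans h)
  have hPQ_A := hPQ.mono hB₂
  have hLR_A := hLR.mono hB₁
  have hsum := hPQ_A.card_add_card_le_majority hPQ_A.symm hLR_A
  have hmaj : IsBiindep G (B₁ ∩ B₂) (majority P Q L) (majority Q P R) := by
    have hB : majority (B₁ ∩ B₂) B₂ B₁ = B₁ ∩ B₂ := by grind [majority]
    refine ⟨?_, ?_, (hPQ_A.isBiindep_majority hPQ_A.symm hLR_A).not_adj⟩
    · exact hB ▸ majority_subset_majority hP hPQ.right_subset hLR.left_subset
    · rw [majority_left_comm P Q R]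
      exact hB ▸ majority_subset_majority hP hPQ.right_subset hLR.right_subset
  have := hmaj.card_add_card_le
  omega

theorem exists_subset_biindepNum_sdiff_add_card_le {Y : Finset W}
    (h : biindepNum G (A \ Y) < biindepNum G A) :
    ∃ Y' ⊆ Y, 0 < Y'.card ∧ Y'.card ≤ 2 ∧ biindepNum G (A \ Y') + Y'.card ≤ biindepNum G A := by
  by_contra! hdrop
  have hsingle (y : W) (hy : y ∈ Y) : biindepNum G A ≤ biindepNum G (A \ {y}) := by
    have := hdrop {y} (by simpa using hy) (by simp) (by simp)
    rw [Finset.card_singleton] at this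
    omega
  refine h.not_ge (biindepNum_le_sdiff_of_forall_card_le_two fun Y' hY' hcard => ?_)
  have : Y'.card = 0 ∨ Y'.card = 1 ∨ Y'.card = 2 := by omega
  rcases this with h0 | h1 | h2
  · rw [Finset.card_eq_zero.1 h0, Finset.sdiff_empty]
  · obtain ⟨y, rfl⟩ := Finset.card_eq_one.1 h1
    exact hsingle y (Finset.singleton_subset_iff.1 hY')
  · have hpair := hdrop Y' hY' (by omega) hcard
    obtain ⟨y, z, -, rfl⟩ := Finset.card_eq_two.1 h2
    rw [Finset.insert_subset_iff, Finset.singleton_subset_iff] at hY'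
    rw [h2, Finset.insert_eq, Finset.sdiff_union_distrib] at hpair
    rw [Finset.insert_eq, Finset.sdiff_union_distrib]
    exact biindepNum_le_inter_of_le_add_one Finset.sdiff_subset Finset.sdiff_subset
      (hsingle y hY'.1) (hsingle z hY'.2) (by omega)

theorem exists_subset_card_le_alphaOn_sdiff_lt {a n : ℕ} {Y : Finset W}
    (hA : biindepNum G A ≤ 2 * a + n) (hY : alphaOn G ↑(A \ Y) < a) :
    ∃ Y' ⊆ Y, Y'.card ≤ n + 2 ∧ alphaOn G ↑(A \ Y') < a := by
  induction n using Nat.strong_induction_on generalizing A with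
  | _ n ih =>
    by_cases hα : alphaOn G A < a
    · exact ⟨∅, by simp, by simp, by simpa using hα⟩
    have hlt : biindepNum G (A \ Y) < biindepNum G A := by
      by_contra! hle
      exact hα ((alphaOn_le_of_biindepNum_le Finset.sdiff_subset hle).trans_lt hY)
    obtain ⟨Y₁, hY₁, hpos, hle_two, hdrop⟩ := exists_subset_biindepNum_sdiff_add_card_le hlt
    by_cases hn : Y₁.card ≤ n
    · have hY_sdiff : alphaOn G ↑((A \ Y₁) \ Y) < a := by
        refine (alphaOn_mono (Finset.finite_toSet _) (Finset.coe_subset.2 ?_)).trans_lt hY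
        exact Finset.sdiff_subset_sdiff Finset.sdiff_subset subset_rfl
      obtain ⟨Y₂, hY₂, hcard, hlt⟩ := ih (n - Y₁.card) (by omega) (A := A \ Y₁) (by omega) hY_sdiff
      refine ⟨Y₁ ∪ Y₂, Finset.union_subset hY₁ hY₂, ?_, ?_⟩
      · have := Finset.card_union_le Y₁ Y₂
        omega
      · rwa [sdiff_sdiff_left] at hlt
    · refine ⟨Y₁, hY₁, by omega, ?_⟩
      have := two_mul_alphaOn_le_biindepNum G (A \ Y₁)
      omega

theorem IsBiindep.isIndep_inter_union (h : IsBiindep G A L R) {K K' : Finset W}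
    (hK : IsIndep G K) (hK' : IsIndep G K') :
    IsIndep G ((L ∩ R) ∪ ((L ∩ K) ∪ (R ∩ K'))) := by
  intro u hu v hv hadj
  have := hK u
  have := hK' u
  have := h.not_adj u
  have := h.symm.not_adj u
  grind

theorem biindepNum_le_two_mul_alphaOn_add_card {K K' Z : Finset W} (hK : IsIndep G K)
    (hK' : IsIndep G K') (hA : A ⊆ K ∪ K' ∪ Z) :
    biindepNum G A ≤ 2 * alphaOn G A + Z.card := by
  obtain ⟨L, R, hLR, hcard⟩ := exists_isBiindep_card_add_card_eq G A
  have hLA := hLR.left_subset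
  have hRA := hLR.right_subset
  let S := (L ∩ R) ∪ ((L ∩ K) ∪ (R ∩ K'))
  let S' := (L ∩ R) ∪ ((L ∩ K') ∪ (R ∩ K))
  have hS : S.card ≤ alphaOn G A := (hLR.isIndep_inter_union hK hK').card_le_alphaOn
    A.finite_toSet (Finset.coe_subset.2 (by grind))
  have hS' : S'.card ≤ alphaOn G A := (hLR.isIndep_inter_union hK' hK).card_le_alphaOn
    A.finite_toSet (Finset.coe_subset.2 (by grind))
  have hunion : (L ∪ R).card ≤ (S ∪ S').card + Z.card :=
    (Finset.card_le_card (by grind)).trans (Finset.card_union_le _ _)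
  have hinter : (L ∩ R).card ≤ (S ∩ S').card := Finset.card_le_card (by grind)
  have := Finset.card_union_add_card_inter L R
  have := Finset.card_union_add_card_inter S S'
  omega

end Biindependence

theorem stmt16_general {W : Type*} (G : SimpleGraph W) {C : Set W} (hC : C.Finite) (Z : Finset W)
    (hZ : (G.induce (C \ ↑Z)).Colorable 2) (S : Finset W) (hconf : 0 < conf G C S) :
    ∃ S' ⊆ S, S'.card ≤ Z.card + 2 ∧ 0 < conf G C S' := by
  lift C to Finset W using hC
  rw [← Finset.coe_sdiff] at hZ
  obtain ⟨K, K', hK, hK', hunion⟩ := exists_isIndep_union_eq_of_colorable_two hZ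
  have hnum : biindepNum G C ≤ 2 * alphaOn G C + Z.card :=
    biindepNum_le_two_mul_alphaOn_add_card hK hK' (by grind)
  let Y : Finset W := {v ∈ C | v ∈ nbhd G S}
  have hY : alphaOn G ↑(C \ Y) < alphaOn G C := by
    convert conf_pos_iff.1 hconf using 2
    ext v
    simp only [Y, Finset.coe_sdiff, Finset.coe_filter, Set.mem_sdiff, Set.mem_setOf_eq]
    tauto
  obtain ⟨Y', hY'Y, hcard, hlt⟩ := exists_subset_card_le_alphaOn_sdiff_lt hnum hY
  obtain ⟨S', hS'S, hS'card, hY'S'⟩ := exists_subset_card_le_subset_nbhd (G := G) (S := S)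
    fun v hv => (Finset.mem_filter.1 (hY'Y hv)).2
  refine ⟨S', hS'S, hS'card.trans hcard, conf_pos_iff.2 (lt_of_le_of_lt ?_ hlt)⟩
  refine alphaOn_mono (Finset.finite_toSet _) ?_
  rw [Finset.coe_sdiff]
  exact Set.sdiff_subset_sdiff_right hY'S'

/-- If a connected component `C` of `G - X` has a feedback vertex set of size
at most `d` and an independent set `X_I ⊆ X` has `conf_C(X_I) > 0`, then some
`X' ⊆ X_I` with `|X'| ≤ d + 2` has `conf_C(X') > 0`. -/
theorem stmt16 (G : SimpleGraph V) (X : Finset V) (C : Set V)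
    (hC : IsCompOf G (Set.univ \ ↑X) C) (d : ℕ)
    (hfvs : ∃ Z : Finset V, Z.card ≤ d ∧ (G.induce (C \ ↑Z)).IsAcyclic)
    (XI : Finset V) (hXI : XI ⊆ X) (hind : IsIndep G XI)
    (hconf : 0 < conf G C XI) :
    ∃ X' ⊆ XI, X'.card ≤ d + 2 ∧ 0 < conf G C X' := by
  obtain ⟨Z, hZd, hZ⟩ := hfvs
  obtain ⟨X', hX', hcard, hpos⟩ := stmt16_general G C.toFinite Z hZ.colorable_two XI hconf
  exact ⟨X', hX', by omega, hpos⟩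

end VCKernel
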